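/- Let n be a positive even integer and z ∈ I^FPF_n. Then every coefficient of the symplectic Grothendieck polynomial 𝔊^Sp_z, regarded as a polynomial in β, x_1, …, x_n with integer coefficients, is nonnegative; that is, 𝔊^Sp_z ∈ ℕ[β][x_1,…,x_n]. -/

import Mathlib

open MvPolynomial

noncomputable section

/-- The coefficient ring `ℤ[β]`. -/
abbrev Rb : Type := Polynomial ℤ

/-- The indeterminate `β`. -/
def bb : Rb := Polynomial.X

/-- The order-reversing permutation `n⋯321`, i.e. `i ↦ n+1-i` in 1-indexed notation. -/
def revPerm (n : ℕ) : Equiv.Perm (Fin n) :=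
  ⟨Fin.rev, Fin.rev, fun i => Fin.rev_rev i, fun i => Fin.rev_rev i⟩

/-- `z` is a fixed-point-free involution. -/
def IsFPF {n : ℕ} (z : Equiv.Perm (Fin n)) : Prop :=
  z * z = 1 ∧ ∀ i, z i ≠ i

/-- `x_i + x_j + β x_i x_j`. -/
def oplus {n : ℕ} (i j : Fin n) : MvPolynomial (Fin n) Rb :=
  X i + X j + C bb * (X i * X j)

/-- `IsDivDiffB i j f g` encodes `∂_i^{(β)} f = g` where `j = i+1`:
`∂_i^{(β)} f = ((1+βx_j) f - s_i((1+βx_j) f)) / (x_i - x_j)`, stated multiplicatively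
(the quotient is exact, and `g` is uniquely determined since the ring is a domain). -/
def IsDivDiffB {n : ℕ} (i j : Fin n) (f g : MvPolynomial (Fin n) Rb) : Prop :=
  (X i - X j) * g =
    (1 + C bb * X j) * f - rename ⇑(Equiv.swap i j) ((1 + C bb * X j) * f)

/-- `∏_{1 ≤ i < j ≤ n-i} (x_i + x_j + β x_i x_j)` (variables 0-indexed). -/
def spTop (n : ℕ) : MvPolynomial (Fin n) Rb :=
  ∏ p ∈ Finset.univ.filter
      (fun p : Fin n × Fin n => p.1 < p.2 ∧ (p.1 : ℕ) + (p.2 : ℕ) + 2 ≤ n),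
    oplus p.1 p.2

/-- `x_1^{n-1} x_2^{n-2} ⋯ x_{n-1}^1` (variables 0-indexed). -/
def grTop (n : ℕ) : MvPolynomial (Fin n) Rb :=
  ∏ a : Fin n, X a ^ (n - 1 - (a : ℕ))

/-- The defining property of the family of symplectic Grothendieck polynomials. -/
def IsSpFam (n : ℕ) (G : Equiv.Perm (Fin n) → MvPolynomial (Fin n) Rb) : Prop :=
  G (revPerm n) = spTop n ∧
    ∀ z : Equiv.Perm (Fin n), IsFPF z →
      ∀ i j : Fin n, (j : ℕ) = (i : ℕ) + 1 →
        z i ≠ j → z j ≠ i → z j < z i →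
          IsDivDiffB i j (G z) (G (Equiv.swap i j * z * Equiv.swap i j))

/-- The defining property of the family of Grothendieck polynomials. -/
def IsGrothFam (n : ℕ) (G : Equiv.Perm (Fin n) → MvPolynomial (Fin n) Rb) : Prop :=
  G (revPerm n) = grTop n ∧
    ∀ (w : Equiv.Perm (Fin n)) (i j : Fin n), (j : ℕ) = (i : ℕ) + 1 →
      w j < w i → IsDivDiffB i j (G w) (G (w * Equiv.swap i j))

/-- The length (number of inversions) of a permutation. -/
def invLen {n : ℕ} (w : Equiv.Perm (Fin n)) : ℕ :=
  (Finset.univ.filter (fun p : Fin n × Fin n => p.1 < p.2 ∧ w p.2 < w p.1)).card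

/-- The fixed-point-free involution length `ℓ_fpf(z) = #{(i,j) : z(i) > z(j) < i < j}`. -/
def fpfLen {n : ℕ} (z : Equiv.Perm (Fin n)) : ℕ :=
  (Finset.univ.filter
      (fun p : Fin n × Fin n => z p.2 < z p.1 ∧ z p.2 < p.1 ∧ p.1 < p.2)).card

/-- The underlying function of `Θ = (1,2)(3,4)⋯(n-1,n)`. -/
def thetaFun (n : ℕ) (hn : n % 2 = 0) (i : Fin n) : Fin n :=
  ⟨if (i : ℕ) % 2 = 0 then (i : ℕ) + 1 else (i : ℕ) - 1, by
    have hi := i.isLt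
    split_ifs with h <;> omega⟩

/-- The fixed-point-free involution `Θ = (1,2)(3,4)⋯(n-1,n)`. -/
def theta (n : ℕ) (hn : n % 2 = 0) : Equiv.Perm (Fin n) :=
  Function.Involutive.toPerm (thetaFun n hn) (by
    intro i
    have hi := i.isLt
    apply Fin.ext
    simp only [thetaFun]
    split_ifs <;> omega)

/-- One step of the partial Hecke action: `heckeStep a z = some (z · s_{a+1})` when defined,
with `a` a 0-indexed letter (so `a` corresponds to the simple transposition of `a+1, a+2`
in 1-indexed notation). -/
def heckeStep {n : ℕ} (a : ℕ) (z : Equiv.Perm (Fin n)) : Option (Equiv.Perm (Fin n)) :=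
  if h : a + 1 < n then
    let i : Fin n := ⟨a, Nat.lt_of_succ_lt h⟩
    let j : Fin n := ⟨a + 1, h⟩
    if z i < z j then some (Equiv.swap i j * z * Equiv.swap i j)
    else if z i = j ∧ z j = i then none
    else if z i ≠ j ∧ z j ≠ i ∧ z j < z i then some z
    else none
  else none

/-- Apply a word of (0-indexed) letters to `z` via the partial Hecke action. -/
def heckeApply {n : ℕ} (l : List ℕ) (z : Equiv.Perm (Fin n)) :
    Option (Equiv.Perm (Fin n)) :=
  l.foldl (fun o a => o.bind (heckeStep a)) (some z)

/-- The simple transposition corresponding to the 0-indexed letter `a`. -/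
def swapAt (n : ℕ) (a : ℕ) : Equiv.Perm (Fin n) :=
  if h : a + 1 < n then Equiv.swap ⟨a, Nat.lt_of_succ_lt h⟩ ⟨a + 1, h⟩ else 1

/-- The permutation `s_{i_1} s_{i_2} ⋯ s_{i_l}` of a word. -/
def wordToPerm (n : ℕ) (l : List ℕ) : Equiv.Perm (Fin n) := (l.map (swapAt n)).prod

/-- `l` is a reduced word for `w`. -/
def IsReducedWord (n : ℕ) (w : Equiv.Perm (Fin n)) (l : List ℕ) : Prop :=
  (∀ a ∈ l, a + 1 < n) ∧ wordToPerm n l = w ∧ l.length = invLen w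

/-- The set of Hecke atoms `B_fpf(z)`. -/
def Bfpf (n : ℕ) (hn : n % 2 = 0) (z : Equiv.Perm (Fin n)) :
    Finset (Equiv.Perm (Fin n)) :=
  @Finset.filter _
    (fun w => ∃ l : List ℕ, IsReducedWord n w l ∧ heckeApply l (theta n hn) = some z)
    (Classical.decPred _) Finset.univ

/-- `extPerm z w` is the permutation `z × w` acting on the first `m` letters by `z`
and the last `n` letters by `w`. -/
def extPerm {m n : ℕ} (z : Equiv.Perm (Fin m)) (w : Equiv.Perm (Fin n)) :
    Equiv.Perm (Fin (m + n)) :=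
  finSumFinEquiv.symm.trans ((Equiv.sumCongr z w).trans finSumFinEquiv)

/-- `rank(z_{[i][j]}) = #{k ∈ [j] : z(k) ≤ i}` (1-indexed sizes `i, j`). -/
def permRank {n : ℕ} (z : Equiv.Perm (Fin n)) (i j : ℕ) : ℕ :=
  (Finset.univ.filter (fun k : Fin n => (k : ℕ) < j ∧ ((z k : Fin n) : ℕ) < i)).card

/-- The rank of the upper-left `i × j` corner of `A` (1-indexed sizes `i, j ≤ n`). -/
def cornerRank {n : ℕ} (A : Matrix (Fin n) (Fin n) ℂ) (i j : ℕ) : ℕ :=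
  Matrix.rank (Matrix.of fun (a : Fin (min i n)) (b : Fin (min j n)) =>
    A ⟨(a : ℕ), lt_of_lt_of_le a.isLt (min_le_right i n)⟩
      ⟨(b : ℕ), lt_of_lt_of_le b.isLt (min_le_right j n)⟩)

/-- The orthogonal Rothe diagram `D^O(z) = {(i, z(j)) : z(i) > z(j) ≤ i < j}` (0-indexed). -/
def DO (n : ℕ) (z : Equiv.Perm (Fin n)) : Finset (Fin n × Fin n) :=
  Finset.image (fun p : Fin n × Fin n => (p.1, z p.2))
    (Finset.univ.filter (fun p : Fin n × Fin n => z p.2 < z p.1 ∧ z p.2 ≤ p.1 ∧ p.1 < p.2))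

/-- The symplectic Rothe diagram `D^Sp(z) = {(i, z(j)) : z(i) > z(j) < i < j}` (0-indexed). -/
def DSp (n : ℕ) (z : Equiv.Perm (Fin n)) : Finset (Fin n × Fin n) :=
  Finset.image (fun p : Fin n × Fin n => (p.1, z p.2))
    (Finset.univ.filter (fun p : Fin n × Fin n => z p.2 < z p.1 ∧ z p.2 < p.1 ∧ p.1 < p.2))

/-- The essential set `Ess(D) = {(i,j) ∈ D : (i,j+1) ∉ D and (i+1,j) ∉ D}`. -/
def Ess {n : ℕ} (D : Finset (Fin n × Fin n)) : Finset (Fin n × Fin n) :=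
  D.filter (fun p =>
    (∀ q ∈ D, ¬(q.1 = p.1 ∧ (q.2 : ℕ) = (p.2 : ℕ) + 1)) ∧
    (∀ q ∈ D, ¬((q.1 : ℕ) = (p.1 : ℕ) + 1 ∧ q.2 = p.2)))

/-- A permutation is vexillary if it avoids the pattern 2143. -/
def Vexillary {n : ℕ} (z : Equiv.Perm (Fin n)) : Prop :=
  ¬ ∃ i j k l : Fin n, i < j ∧ j < k ∧ k < l ∧ z j < z i ∧ z i < z l ∧ z l < z k

/-- The ideal of `ℤ[x_1,…,x_N]` generated by symmetric polynomials with zero constant term. -/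
def ILambda (N : ℕ) : Ideal (MvPolynomial (Fin N) ℤ) :=
  Ideal.span {f : MvPolynomial (Fin N) ℤ |
    (∀ σ : Equiv.Perm (Fin N), rename (⇑σ) f = f) ∧ coeff 0 f = 0}

/-- Substitute `x_j = 0` for all `j > n`, producing a polynomial in `x_1,…,x_n`. -/
def truncVars (n N : ℕ) (f : MvPolynomial (Fin N) Rb) : MvPolynomial (Fin n) Rb :=
  aeval (fun i : Fin N => if h : (i : ℕ) < n then X ⟨(i : ℕ), h⟩ else 0) f

/-- The order used to list the elements of a pipe-dream subset `S`:
rows weakly increasing, columns strictly decreasing within a row. -/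
def rowOrder {n : ℕ} (p q : Fin n × Fin n) : Prop :=
  p.1 < q.1 ∨ (p.1 = q.1 ∧ q.2 < p.2)

/-- `δ(S)` is a symplectic Hecke word for `z` (with Hecke words computed from `Θ`);
here `L` is the listing of `S` in the order `rowOrder`, and `(a,b) ∈ S` (0-indexed)
contributes the 0-indexed letter `a + b`, i.e. the 1-indexed letter `(b+1)+(a+1)-1`. -/
def DeltaHeckeWord (n : ℕ) (hn : n % 2 = 0) (z : Equiv.Perm (Fin n))
    (S : Finset (Fin n × Fin n)) : Prop :=
  ∃ L : List (Fin n × Fin n), L.toFinset = S ∧ L.Chain' rowOrder ∧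
    heckeApply (L.map (fun p => (p.1 : ℕ) + (p.2 : ℕ))) (theta n hn) = some z

/-!
Let the symplectic Hecke operators `u_a` act on the functions on the fixed-point-free involutions,
with vacuum the indicator of `Θ`, and apply to it the product of the Fomin–Kirillov factors
`1 + (x_i + x_j + β x_i x_j) u_{i+j}`, arranged in columns. The Yang–Baxter relation and the
invariance of the vacuum show that the result `F` satisfies
`(1 + x_{i+1} u_i) F = (1 + x_i u_i) (s_i F)`; read on coefficients, this is the divided difference
recursion. The coefficient of `F` at the order-reversing involution comes from a single choice of
terms, and equals the prescribed product. Since every involution is reached from that one by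
descents, the coefficients of `F` are the symplectic Grothendieck polynomials, and `F` is built
without subtraction.
-/

theorem comp_swap_apply_of_ne {ι R : Type*} [DecidableEq ι] (x : ι → R) {a b k : ι} (ha : k ≠ a)
    (hb : k ≠ b) : (x ∘ Equiv.swap a b) k = x k :=
  congrArg x (Equiv.swap_apply_of_ne_of_ne ha hb)

section HeckeFamily

variable {R A : Type*} [CommSemiring R] [Semiring A] [Algebra R A] {u : ℕ → A}

/-- The multiplicative formal group law `s ⊕ t = s + t + βst`. -/
def fglAdd (β s t : R) : R := s + t + β * (s * t)

theorem fglAdd_comm (β s t : R) : fglAdd β s t = fglAdd β t s := by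
  simp only [fglAdd]; ring

/-- The Fomin–Kirillov factor `h(t) = 1 + tu`. When `u² = βu` it is a one-parameter subgroup for
the formal group law `fglAdd β`. -/
def heckeExp (u : A) (t : R) : A := 1 + t • u

/-- Generators of the Hecke algebra of type `A` with quadratic relation `u² = βu`, where the letter
`a` stands for the transposition of `a` and `a + 1`. -/
structure IsHeckeFamily (β : R) (u : ℕ → A) : Prop where
  mul_self : ∀ a, u a * u a = β • u a
  commute : ∀ a b, a + 2 ≤ b → Commute (u a) (u b)
  braid : ∀ a, u a * u (a + 1) * u a = u (a + 1) * u a * u (a + 1)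

/-- `column u β s y r m = h_{r+m-1}(s ⊕ y_{m-1}) ⋯ h_{r+1}(s ⊕ y₁) h_r(s ⊕ y₀)`, where `h_a` is the
factor of the letter `a`. -/
def column (u : ℕ → A) (β s : R) (y : ℕ → R) (r : ℕ) :
    ℕ → A
  | 0 => 1
  | m + 1 => heckeExp (u (r + m)) (fglAdd β s (y m)) * column u β s y r m

/-- The product of the columns `j, j + 1, …, j + d - 1`, from left to right, where column `j` has a
factor `h_{i+j}(x_j ⊕ x_i)` for each `j < i < n`. -/
def columnProd (u : ℕ → A) (β : R) (x : ℕ → R) (n : ℕ) :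
    ℕ → ℕ → A
  | _, 0 => 1
  | j, d + 1 => column u β (x j) (fun k => x (j + 1 + k)) (2 * j + 1) (n - 1 - j) *
      columnProd u β x n (j + 1) d

@[simp]
theorem heckeExp_zero_left (t : R) : heckeExp (0 : A) t = 1 := by simp [heckeExp]

theorem heckeExp_mul {β : R} {v : A} (hv : v * v = β • v) (s t : R) :
    heckeExp v s * heckeExp v t = heckeExp v (fglAdd β s t) := by
  simp only [heckeExp, fglAdd, mul_add, add_mul, smul_mul_smul_comm, hv, one_mul, mul_one]
  module

theorem heckeExp_commute {v w : A} (h : Commute v w) (s t : R) :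
    Commute (heckeExp v s) (heckeExp w t) :=
  (Commute.one_left _).add_left
    (((Commute.one_right v).add_right (h.smul_right t)).smul_left s)

theorem column_congr {β s : R} {y y' : ℕ → R} {r m : ℕ} (h : ∀ k < m, y k = y' k) :
    column u β s y r m = column u β s y' r m := by
  induction m with
  | zero => rfl
  | succ m ih => rw [column, column, ih fun k hk => h k (by omega), h m m.lt_succ_self]

theorem column_add (β s : R) (y : ℕ → R) (r p q : ℕ) :
    column u β s y r (p + q) =
      column u β s (fun k => y (p + k)) (r + p) q * column u β s y r p := by
  induction q with
  | zero => rw [column, one_mul, add_zero]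
  | succ q ih => rw [← add_assoc, column, column, ih, mul_assoc, add_assoc]

theorem column_succ' (β s : R) (y : ℕ → R) (r m : ℕ) :
    column u β s y r (m + 1) =
      column u β s (fun k => y (k + 1)) (r + 1) m * heckeExp (u r) (fglAdd β s (y 0)) := by
  rw [add_comm, column_add]
  simp only [column, mul_one, add_zero, add_comm 1]

theorem column_eq_one {β s : R} {y : ℕ → R} {r : ℕ} (hu : ∀ a, r ≤ a → u a = 0) (m : ℕ) :
    column u β s y r m = 1 := by
  induction m with
  | zero => rfl
  | succ m ih => rw [column, ih, hu _ (r.le_add_right m), heckeExp_zero_left, one_mul]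

theorem IsHeckeFamily.commute_column {β : R} (hu : IsHeckeFamily β u) {s : R} {y : ℕ → R}
    {b r m : ℕ} (h : b + 2 ≤ r ∨ r + m + 1 ≤ b) (t : R) :
    Commute (heckeExp (u b) t) (column u β s y r m) := by
  induction m with
  | zero => exact Commute.one_right _
  | succ m ih =>
    refine .mul_right (heckeExp_commute ?_ _ _) (ih (by omega))
    rcases h with h | h
    · exact hu.commute b (r + m) (by omega)
    · exact (hu.commute (r + m) b (by omega)).symm

theorem columnProd_congr {β : R} {x x' : ℕ → R} {n j : ℕ} (h : ∀ k, j ≤ k → x k = x' k) (d : ℕ) :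
    columnProd u β x n j d = columnProd u β x' n j d := by
  induction d generalizing j with
  | zero => rfl
  | succ d ih =>
    rw [columnProd, columnProd, ih fun k hk => h k (by omega), h j le_rfl,
      column_congr fun k _ => h (j + 1 + k) (by omega)]

theorem IsHeckeFamily.commute_columnProd {β : R} (hu : IsHeckeFamily β u) {x : ℕ → R} {n j b : ℕ}
    (h : b + 1 ≤ 2 * j) (t : R) (d : ℕ) :
    Commute (heckeExp (u b) t) (columnProd u β x n j d) := by
  induction d generalizing j with
  | zero => exact Commute.one_right _
  | succ d ih => exact (hu.commute_column (.inl (by omega)) t).mul_right (ih (by omega))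

end HeckeFamily

section YangBaxter

variable {R A : Type*} [CommRing R] [Ring A] [Algebra R A] {β : R}

theorem heckeExp_yangBaxter {v w : A} (hv : v * v = β • v) (hw : w * w = β • w)
    (hvw : v * w * v = w * v * w) (s t : R) :
    heckeExp v s * heckeExp w (fglAdd β s t) * heckeExp v t =
      heckeExp w t * heckeExp v (fglAdd β s t) * heckeExp w s := by
  simp only [heckeExp, fglAdd, mul_add, add_mul, smul_mul_assoc, mul_smul_comm, smul_smul, one_mul,
    mul_one, hv, hw, hvw]
  module

/-- The symmetric cofactor in the identities `h_v(t) h_w(t) h_v(s) = E h_w(t)` and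
`h_v(s) h_w(t) h_v(t) = h_w(t) E`, for `c = ⁅w, v⁆` and `c = ⁅v, w⁆` respectively. -/
def exchangeFactor (β : R) (v c : A) (s t : R) : A := 1 + fglAdd β s t • v + (s * t) • c

theorem exchangeFactor_comm (β : R) (v c : A) (s t : R) :
    exchangeFactor β v c s t = exchangeFactor β v c t s := by
  rw [exchangeFactor, exchangeFactor, fglAdd_comm, mul_comm s t]

theorem heckeExp_exchange_right {v w : A} (hv : v * v = β • v) (hw : w * w = β • w)
    (hvw : v * w * v = w * v * w) (s t : R) :
    heckeExp v t * heckeExp w t * heckeExp v s =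
      exchangeFactor β v ⁅w, v⁆ s t * heckeExp w t := by
  simp only [exchangeFactor, heckeExp, fglAdd, Ring.lie_def, mul_add, add_mul, sub_mul, smul_sub,
    smul_mul_assoc, mul_smul_comm, smul_smul, one_mul, mul_one, hv, mul_assoc v w w, hw, hvw]
  module

theorem heckeExp_exchange_left {v w : A} (hv : v * v = β • v) (hw : w * w = β • w)
    (hvw : v * w * v = w * v * w) (s t : R) :
    heckeExp v s * heckeExp w t * heckeExp v t =
      heckeExp w t * exchangeFactor β v ⁅v, w⁆ s t := by
  simp only [exchangeFactor, heckeExp, fglAdd, Ring.lie_def, mul_add, add_mul, mul_sub, smul_sub,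
    smul_mul_assoc, mul_smul_comm, smul_smul, one_mul, mul_one, hv, ← mul_assoc, hw, hvw]
  module

namespace IsHeckeFamily

variable {u : ℕ → A}

theorem heckeExp_mul_adjacent (hu : IsHeckeFamily β u) (r : ℕ) (s a b : R) :
    heckeExp (u r) b * heckeExp (u (r + 1)) (fglAdd β s b) * heckeExp (u r) (fglAdd β s a) =
      heckeExp (u (r + 1)) s * heckeExp (u r) s *
        exchangeFactor β (u r) ⁅u (r + 1), u r⁆ a b * heckeExp (u (r + 1)) b := by
  have hv := hu.mul_self r
  have hw := hu.mul_self (r + 1)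
  calc
    _ = heckeExp (u r) b * heckeExp (u (r + 1)) (fglAdd β b s) * heckeExp (u r) s *
          heckeExp (u r) a := by
      rw [mul_assoc _ (heckeExp (u r) s), heckeExp_mul hv, fglAdd_comm β b]
    _ = heckeExp (u (r + 1)) s * heckeExp (u r) s *
          (heckeExp (u r) b * heckeExp (u (r + 1)) b * heckeExp (u r) a) := by
      rw [heckeExp_yangBaxter hv hw (hu.braid r), fglAdd_comm β b, ← heckeExp_mul hv]
      simp only [mul_assoc]
    _ = _ := by rw [heckeExp_exchange_right hv hw (hu.braid r)]; simp only [mul_assoc]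

theorem heckeExp_mul_column (hu : IsHeckeFamily β u) (s : R) (y : ℕ → R) (r p q : ℕ) :
    heckeExp (u (r + p)) (y (p + 1)) * column u β s y r (p + 2 + q) =
      column u β s (fun k => y (p + 2 + k)) (r + (p + 2)) q *
        (heckeExp (u (r + p + 1)) s * heckeExp (u (r + p)) s *
          exchangeFactor β (u (r + p)) ⁅u (r + p + 1), u (r + p)⁆ (y p) (y (p + 1))) *
        column u β s y r p * heckeExp (u (r + p + 1)) (y (p + 1)) := by
  have upper := (hu.commute_column (s := s) (y := fun k => y (p + 2 + k)) (b := r + p)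
    (r := r + (p + 2)) (m := q) (.inl le_rfl) (y (p + 1))).eq
  have lower := (hu.commute_column (s := s) (y := y) (b := r + p + 1) (r := r) (m := p)
    (.inr le_rfl) (y (p + 1))).eq
  calc
    _ = column u β s (fun k => y (p + 2 + k)) (r + (p + 2)) q *
          (heckeExp (u (r + p)) (y (p + 1)) *
            heckeExp (u (r + p + 1)) (fglAdd β s (y (p + 1))) *
              heckeExp (u (r + p)) (fglAdd β s (y p))) * column u β s y r p := by
      rw [column_add, column, column, ← mul_assoc, upper]
      simp only [mul_assoc, add_assoc]
    _ = _ := by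
      rw [hu.heckeExp_mul_adjacent, mul_assoc _ (column u β s y r p), ← lower]
      simp only [mul_assoc]

theorem exists_column_exchange (hu : IsHeckeFamily β u) (s : R) (y : ℕ → R) (r : ℕ) {p m : ℕ}
    (hp : p + 1 < m) : ∃ T : A,
      heckeExp (u (r + p)) (y (p + 1)) * column u β s y r m =
        T * heckeExp (u (r + p + 1)) (y (p + 1)) ∧
      heckeExp (u (r + p)) (y p) * column u β s (y ∘ Equiv.swap p (p + 1)) r m =
        T * heckeExp (u (r + p + 1)) (y p) := by
  obtain ⟨q, rfl⟩ : ∃ q, m = p + 2 + q := Nat.exists_eq_add_of_le hp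
  refine ⟨_, hu.heckeExp_mul_column s y r p q, ?_⟩
  have h := hu.heckeExp_mul_column s (y ∘ Equiv.swap p (p + 1)) r p q
  rw [column_congr (m := q) (y' := fun k => y (p + 2 + k)) fun k _ =>
      comp_swap_apply_of_ne y (by omega) (by omega),
    column_congr (m := p) (y' := y) fun k _ => comp_swap_apply_of_ne y (by omega) (by omega)] at h
  simpa only [Function.comp_apply, Equiv.swap_apply_left, Equiv.swap_apply_right,
    exchangeFactor_comm β _ _ (y (p + 1))] using h

theorem heckeExp_adjacent_mul (hu : IsHeckeFamily β u) (r : ℕ) (a b c : R) :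
    heckeExp (u r) (fglAdd β a c) * heckeExp (u (r + 1)) (fglAdd β b c) * heckeExp (u r) b =
      heckeExp (u (r + 1)) b * exchangeFactor β (u r) ⁅u r, u (r + 1)⁆ a b *
        heckeExp (u r) c * heckeExp (u (r + 1)) c := by
  have hv := hu.mul_self r
  have hw := hu.mul_self (r + 1)
  calc
    _ = heckeExp (u r) a *
          (heckeExp (u r) c * heckeExp (u (r + 1)) (fglAdd β c b) * heckeExp (u r) b) := by
      rw [← heckeExp_mul hv, fglAdd_comm β b]
      simp only [mul_assoc]
    _ = heckeExp (u r) a * heckeExp (u (r + 1)) b * heckeExp (u r) b *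
          (heckeExp (u r) c * heckeExp (u (r + 1)) c) := by
      rw [heckeExp_yangBaxter hv hw (hu.braid r), fglAdd_comm β c, ← heckeExp_mul hv]
      simp only [mul_assoc]
    _ = _ := by rw [heckeExp_exchange_left hv hw (hu.braid r)]; simp only [mul_assoc]

theorem column_mul_column_comm (hu : IsHeckeFamily β u) (a b : R) (y : ℕ → R) (r m : ℕ) :
    column u β a y r (m + 1) * (column u β b y (r + 1) m * heckeExp (u r) b) =
      column u β b y r (m + 1) * (column u β a y (r + 1) m * heckeExp (u r) a) := by
  induction m generalizing r y with
  | zero =>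
    simp only [column, mul_one, one_mul, add_zero, heckeExp_mul (hu.mul_self r)]
    congr 1
    simp only [fglAdd]; ring
  | succ m ih =>
    have peel : ∀ a b : R,
        column u β a y r (m + 1 + 1) * (column u β b y (r + 1) (m + 1) * heckeExp (u r) b) =
          column u β a (fun k => y (k + 1)) (r + 1) (m + 1) *
            (column u β b (fun k => y (k + 1)) (r + 1 + 1) m * heckeExp (u (r + 1)) b) *
            (exchangeFactor β (u r) ⁅u r, u (r + 1)⁆ a b * heckeExp (u r) (y 0) *
              heckeExp (u (r + 1)) (y 0)) := by
      intro a b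
      have far := (hu.commute_column (s := b) (y := fun k => y (k + 1)) (b := r)
        (r := r + 1 + 1) (m := m) (.inl le_rfl) (fglAdd β a (y 0))).eq
      calc
        _ = column u β a (fun k => y (k + 1)) (r + 1) (m + 1) *
              (column u β b (fun k => y (k + 1)) (r + 1 + 1) m *
                (heckeExp (u r) (fglAdd β a (y 0)) * heckeExp (u (r + 1)) (fglAdd β b (y 0)) *
                  heckeExp (u r) b)) := by
          rw [column_succ' β a, column_succ' β b, mul_assoc, mul_assoc (column _ _ b _ _ _),
            ← mul_assoc (heckeExp _ (fglAdd β a _)), far]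
          simp only [mul_assoc]
        _ = _ := by rw [hu.heckeExp_adjacent_mul]; simp only [mul_assoc]
    rw [peel a b, peel b a, exchangeFactor_comm, ih]

theorem heckeExp_mul_columnProd (hu : IsHeckeFamily β u) (x : ℕ → R) (i m d : ℕ) (t : R) :
    heckeExp (u (2 * i)) t * columnProd u β x (i + 2 + m) i (d + 1) =
      column u β (x i) (fun k => x (i + 2 + k)) (2 * i + 2) m *
        columnProd u β x (i + 2 + m) (i + 1) d *
          (heckeExp (u (2 * i)) t * heckeExp (u (2 * i + 1)) (fglAdd β (x i) (x (i + 1)))) := by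
  have past_column := (hu.commute_column (s := x i) (y := fun k => x (i + 2 + k))
    (b := 2 * i) (r := 2 * i + 2) (m := m) (.inl le_rfl) t).eq
  have past_prod := ((hu.commute_columnProd (x := x) (n := i + 2 + m) (j := i + 1)
    (b := 2 * i) (by omega) t d).mul_left (hu.commute_columnProd (b := 2 * i + 1) (by omega)
      (fglAdd β (x i) (x (i + 1))) d)).eq
  have size : i + 2 + m - 1 - i = m + 1 := by omega
  have shift : (fun k => x (i + 1 + (k + 1))) = fun k => x (i + 2 + k) := by
    funext k; congr 1; omega
  rw [columnProd, size, column_succ', shift, ← mul_assoc, ← mul_assoc, past_column,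
    mul_assoc (column _ _ _ _ _ _), mul_assoc (column _ _ _ _ _ _), past_prod]
  simp only [mul_assoc]

end IsHeckeFamily

/-- The relations satisfied by a vector that behaves as the involution `Θ = (1,2)(3,4)⋯` does under
the symplectic Hecke action. -/
structure IsSymplecticVacuum {M : Type*} [AddCommGroup M] [Module R M] (f : ℕ → Module.End R M)
    (v : M) : Prop where
  annihilate : ∀ j, f (2 * j) v = 0
  exchange : ∀ j, f (2 * j) (f (2 * j + 1) v) = f (2 * j + 2) (f (2 * j + 1) v)

namespace IsSymplecticVacuum

variable {M : Type*} [AddCommGroup M] [Module R M] {f : ℕ → Module.End R M} {v : M}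

theorem heckeExp_apply (hv : IsSymplecticVacuum f v) (j : ℕ) (b c : R) :
    heckeExp (f (2 * j)) b (heckeExp (f (2 * j + 1)) c v) =
      heckeExp (f (2 * j + 2)) b (heckeExp (f (2 * j + 1)) c v) := by
  have annihilate' : f (2 * j + 2) v = 0 := hv.annihilate (j + 1)
  simp [heckeExp, hv.annihilate, hv.exchange, annihilate']

theorem heckeExp_columnProd_apply (hv : IsSymplecticVacuum f v) (hf : IsHeckeFamily β f)
    (x : ℕ → R) (i m d : ℕ) (hzero : f (2 * i + 2 + m) = 0) :
    heckeExp (f (2 * i)) (x (i + 1)) (columnProd f β x (i + 2 + m) i (d + 2) v) =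
      (column f β (x i) (fun k => x (i + 2 + k)) (2 * i + 2) (m + 1) *
        (column f β (x (i + 1)) (fun k => x (i + 2 + k)) (2 * i + 2 + 1) m *
          heckeExp (f (2 * i + 2)) (x (i + 1))))
        (columnProd f β x (i + 2 + m) (i + 2) d
          (heckeExp (f (2 * i + 1)) (fglAdd β (x i) (x (i + 1))) v)) := by
  have past_prod (w : M) : heckeExp (f (2 * i + 2)) (x (i + 1))
      (columnProd f β x (i + 2 + m) (i + 2) d w) =
        columnProd f β x (i + 2 + m) (i + 2) d (heckeExp (f (2 * i + 2)) (x (i + 1)) w) :=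
    LinearMap.congr_fun (hf.commute_columnProd (by omega) _ d).eq w
  have size : i + 2 + m - 1 - (i + 1) = m := by omega
  have letter : 2 * (i + 1) + 1 = 2 * i + 2 + 1 := rfl
  have shift : (fun k => x (i + 1 + 1 + k)) = fun k => x (i + 2 + k) := rfl
  have extend : column f β (x i) (fun k => x (i + 2 + k)) (2 * i + 2) (m + 1) =
      column f β (x i) (fun k => x (i + 2 + k)) (2 * i + 2) m := by
    rw [column, hzero, heckeExp_zero_left, one_mul]
  rw [← Module.End.mul_apply, hf.heckeExp_mul_columnProd, extend]
  simp only [Module.End.mul_apply]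
  rw [hv.heckeExp_apply, columnProd, size, letter, shift]
  simp only [Module.End.mul_apply, past_prod]

theorem heckeExp_columnProd_swap_self (hv : IsSymplecticVacuum f v) (hf : IsHeckeFamily β f)
    (x : ℕ → R) (i m d : ℕ) (hzero : f (2 * i + 2 + m) = 0) :
    heckeExp (f (2 * i)) (x (i + 1)) (columnProd f β x (i + 2 + m) i (d + 2) v) =
      heckeExp (f (2 * i)) (x i)
        (columnProd f β (x ∘ Equiv.swap i (i + 1)) (i + 2 + m) i (d + 2) v) := by
  have later : columnProd f β (x ∘ Equiv.swap i (i + 1)) (i + 2 + m) (i + 2) d =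
      columnProd f β x (i + 2 + m) (i + 2) d :=
    columnProd_congr (fun k hk => comp_swap_apply_of_ne x (by omega) (by omega)) d
  have tail : (fun k => (x ∘ Equiv.swap i (i + 1)) (i + 2 + k)) = fun k => x (i + 2 + k) :=
    funext fun k => comp_swap_apply_of_ne x (by omega) (by omega)
  have swapped := hv.heckeExp_columnProd_apply hf (x ∘ Equiv.swap i (i + 1)) i m d hzero
  rw [later, tail] at swapped
  simp only [Function.comp_apply, Equiv.swap_apply_left, Equiv.swap_apply_right] at swapped
  rw [hv.heckeExp_columnProd_apply hf x i m d hzero, swapped,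
    hf.column_mul_column_comm, fglAdd_comm]

theorem heckeExp_columnProd_swap (hv : IsSymplecticVacuum f v) (hf : IsHeckeFamily β f) {n : ℕ}
    (hzero : ∀ a, n ≤ a + 1 → f a = 0) (x : ℕ → R) {i j d : ℕ} (hji : j ≤ i) (hin : i + 1 < n)
    (hid : i + 2 ≤ j + d) :
    heckeExp (f (i + j)) (x (i + 1)) (columnProd f β x n j d v) =
      heckeExp (f (i + j)) (x i) (columnProd f β (x ∘ Equiv.swap i (i + 1)) n j d v) := by
  induction d generalizing j with
  | zero => omega
  | succ d ih =>
    rcases hji.lt_or_eq with hji | rfl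
    · obtain ⟨p, rfl⟩ : ∃ p, i = j + 1 + p := Nat.exists_eq_add_of_le hji
      obtain ⟨T, h, h'⟩ := hf.exists_column_exchange (x j) (fun k => x (j + 1 + k)) (2 * j + 1)
        (p := p) (m := n - 1 - j) (by omega)
      have swap_shift : (fun k => (x ∘ Equiv.swap (j + 1 + p) (j + 1 + p + 1)) (j + 1 + k)) =
          (fun k => x (j + 1 + k)) ∘ Equiv.swap p (p + 1) := by
        funext k
        simp only [Function.comp_apply, Equiv.swap_apply_def]
        split_ifs <;> first | omega | rfl
      have ih := ih (j := j + 1) (by omega) (by omega)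
      rw [show j + 1 + p + (j + 1) = 2 * j + 1 + p + 1 by ring] at ih
      rw [columnProd, columnProd, swap_shift, comp_swap_apply_of_ne x (by omega) (by omega),
        show j + 1 + p + j = 2 * j + 1 + p by ring]
      exact (LinearMap.congr_fun h _).trans
        ((congrArg T ih).trans (LinearMap.congr_fun h' _).symm)
    · obtain ⟨m, rfl⟩ : ∃ m, n = j + 2 + m := Nat.exists_eq_add_of_le hin
      obtain ⟨d, rfl⟩ : ∃ e, d = e + 1 := Nat.exists_eq_add_of_le' (by omega)
      rw [← two_mul]
      exact hv.heckeExp_columnProd_swap_self hf x j m d (hzero _ (by omega))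

end IsSymplecticVacuum

end YangBaxter

section SymplecticHecke

variable {n : ℕ}

theorem IsFPF.conj {z : Equiv.Perm (Fin n)} (hz : IsFPF z) (i j : Fin n) :
    IsFPF (Equiv.swap i j * z * Equiv.swap i j) := by
  refine ⟨?_, fun p hp => hz.2 (Equiv.swap i j p) ?_⟩
  · simp only [mul_assoc, Equiv.swap_mul_self_mul]
    rw [← mul_assoc z, hz.1, one_mul, Equiv.swap_mul_self]
  · rw [Equiv.Perm.mul_apply, Equiv.Perm.mul_apply] at hp
    rw [← Equiv.swap_apply_self i j (z _), hp]

/-- The fixed-point-free involutions of `Fin n`. -/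
abbrev FPF (n : ℕ) : Type := {z : Equiv.Perm (Fin n) // IsFPF z}

namespace FPF

/-- The conjugate of a fixed-point-free involution by the transposition of `i` and `j`. -/
def conj (i j : Fin n) (z : FPF n) : FPF n := ⟨_, z.2.conj i j⟩

theorem conj_apply (i j : Fin n) (z : FPF n) (p : Fin n) :
    (conj i j z).1 p = Equiv.swap i j (z.1 (Equiv.swap i j p)) := rfl

theorem apply_apply (z : FPF n) (p : Fin n) : z.1 (z.1 p) = p := Equiv.Perm.congr_fun z.2.1 p

theorem apply_ne (z : FPF n) (p : Fin n) : z.1 p ≠ p := z.2.2 p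

theorem ext {z w : FPF n} (h : ∀ p, z.1 p = w.1 p) : z = w := Subtype.ext (Equiv.ext h)

@[simp]
theorem conj_conj (i j : Fin n) (z : FPF n) : conj i j (conj i j z) = z := by
  refine ext fun p => ?_
  simp [conj_apply]

/-- The condition under which `∂_i^{(β)}` acts on the polynomial of `z`, where `j = i + 1`. -/
def IsDescent (i j : Fin n) (z : FPF n) : Prop := z.1 j < z.1 i ∧ z.1 i ≠ j

instance (i j : Fin n) (z : FPF n) : Decidable (z.IsDescent i j) :=
  inferInstanceAs (Decidable (_ ∧ _))

theorem not_isDescent_conj {i j : Fin n} {z : FPF n} (h : z.IsDescent i j) :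
    ¬ (conj i j z).IsDescent i j := by
  have := z.apply_apply i
  have := z.apply_ne i
  have := z.apply_ne j
  simp only [IsDescent, conj_apply, Equiv.swap_apply_left, Equiv.swap_apply_right] at h ⊢
  grind

theorem conj_conj_comm {i j k l : Fin n} (hik : i ≠ k) (hil : i ≠ l) (hjk : j ≠ k) (hjl : j ≠ l)
    (z : FPF n) : conj i j (conj k l z) = conj k l (conj i j z) := by
  refine ext fun p => ?_
  simp only [conj_apply]
  grind

theorem conj_braid {i j k : Fin n} (hij : i ≠ j) (hik : i ≠ k) (hjk : j ≠ k) (z : FPF n) :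
    conj i j (conj j k (conj i j z)) = conj j k (conj i j (conj j k z)) := by
  have swap_braid (p : Fin n) : Equiv.swap i j (Equiv.swap j k (Equiv.swap i j p)) =
      Equiv.swap j k (Equiv.swap i j (Equiv.swap j k p)) := by grind
  refine ext fun p => ?_
  simp only [conj_apply, swap_braid]

theorem conj_comm (i j : Fin n) (z : FPF n) : conj i j z = conj j i z := by
  refine ext fun p => ?_
  simp only [conj_apply, Equiv.swap_comm]

theorem conj_apply_apply (i j : Fin n) (z : FPF n) : conj (z.1 i) (z.1 j) z = conj i j z := by
  have := z.apply_apply i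
  have := z.apply_apply j
  have := z.apply_ne i
  have := z.apply_ne j
  refine ext fun p => ?_
  have := z.apply_apply p
  simp only [conj_apply]; grind

theorem isDescent_conj_iff {i j k l : Fin n} (hkl : (l : ℕ) = k + 1) (hik : i ≠ k)
    (hil : i ≠ l) (hjk : j ≠ k) (hjl : j ≠ l) {z : FPF n}
    (hz : ¬ (z.1 i = l ∧ z.1 j = k)) (hz' : ¬ (z.1 i = k ∧ z.1 j = l)) :
    (conj k l z).IsDescent i j ↔ z.IsDescent i j := by
  simp only [IsDescent, conj_apply]; grind

end FPF

/-- The operator dual to the symplectic Hecke action of the transposition of `i` and `j`: it sends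
`∑ f(w) w` to `∑ f(w) (w * u)`, where `w * u` is the conjugate of `w` at an ascent, `β w` at a
descent, and `0` when `w` exchanges `i` and `j`. -/
def spOp {R : Type*} [CommSemiring R] (β : R) (i j : Fin n) : Module.End R (FPF n → R) where
  toFun f z := if z.IsDescent i j then f (z.conj i j) + β * f z else 0
  map_add' f g := by ext z; simp only [Pi.add_apply]; split_ifs <;> ring
  map_smul' c f := by
    ext z; simp only [Pi.smul_apply, smul_eq_mul, RingHom.id_apply]; split_ifs <;> ring

section

variable {R : Type*} [CommSemiring R] (β : R) {i j k l : Fin n}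

theorem spOp_apply (i j : Fin n) (f : FPF n → R) (z : FPF n) :
    spOp β i j f z = if z.IsDescent i j then f (z.conj i j) + β * f z else 0 := rfl

theorem spOp_mul_self (i j : Fin n) : spOp β i j * spOp β i j = β • spOp β i j := by
  refine LinearMap.ext fun f => funext fun z => ?_
  simp only [Module.End.mul_apply, LinearMap.smul_apply, Pi.smul_apply, smul_eq_mul, spOp_apply]
  by_cases h : z.IsDescent i j
  · simp only [h, FPF.not_isDescent_conj h, if_true, if_false, zero_add]
  · simp only [h, if_false, mul_zero]

theorem spOp_commute (hij : (j : ℕ) = i + 1) (hkl : (l : ℕ) = k + 1) (hjk : j < k) :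
    Commute (spOp β i j) (spOp β k l) := by
  have hik : i ≠ k := by omega
  have hil : i ≠ l := by omega
  have hjl : j ≠ l := by omega
  refine LinearMap.ext fun f => funext fun z => ?_
  simp only [Module.End.mul_apply, spOp_apply]
  by_cases crossing : z.1 i = l ∧ z.1 j = k
  · have conj_eq : z.conj k l = z.conj i j := by
      rw [← z.conj_apply_apply i j, crossing.1, crossing.2, FPF.conj_comm]
    have descent : z.IsDescent i j ∧ z.IsDescent k l := by
      have := z.apply_apply i
      have := z.apply_apply j
      simp only [FPF.IsDescent]; grind
    have ascent := FPF.not_isDescent_conj descent.1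
    have ascent' : ¬ (z.conj i j).IsDescent k l := conj_eq ▸ FPF.not_isDescent_conj descent.2
    simp only [descent, ascent, ascent', conj_eq, if_true, if_false]
  by_cases parallel : z.1 i = k ∧ z.1 j = l
  · have ascent : ¬ z.IsDescent i j ∧ ¬ z.IsDescent k l := by
      have := z.apply_apply i
      have := z.apply_apply j
      simp only [FPF.IsDescent]; grind
    simp only [ascent, if_false, mul_zero]
  · have descent_ij := FPF.isDescent_conj_iff hkl hik hil hjk.ne hjl crossing parallel
    have descent_kl : (z.conj i j).IsDescent k l ↔ z.IsDescent k l := by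
      refine FPF.isDescent_conj_iff hij hik.symm hjk.ne' hil.symm hjl.symm ?_ ?_
      · rintro ⟨h, h'⟩
        exact crossing ⟨h' ▸ z.apply_apply l, h ▸ z.apply_apply k⟩
      · rintro ⟨h, h'⟩
        exact parallel ⟨h ▸ z.apply_apply k, h' ▸ z.apply_apply l⟩
    simp only [descent_ij, descent_kl, FPF.conj_conj_comm hik hil hjk.ne hjl]
    split_ifs <;> ring

theorem spOp_braid_apply_of_free (hij : i < j) (hjk : j < k) (z : FPF n)
    (hi : z.1 i ∉ ({i, j, k} : Finset (Fin n))) (hj : z.1 j ∉ ({i, j, k} : Finset (Fin n)))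
    (f : FPF n → R) :
    spOp β i j (spOp β j k (spOp β i j f)) z = spOp β j k (spOp β i j (spOp β j k f)) z := by
  have hk : z.1 k ∉ ({i, j, k} : Finset (Fin n)) := by
    have := z.apply_apply k
    have := z.apply_ne k
    grind
  simp only [Finset.mem_insert, Finset.mem_singleton, not_or] at hi hj hk
  have hik := hij.trans hjk
  have hab : z.1 i ≠ z.1 j := z.1.injective.ne hij.ne
  have hbc : z.1 j ≠ z.1 k := z.1.injective.ne hjk.ne
  have hac : z.1 i ≠ z.1 k := z.1.injective.ne hik.ne
  simp only [spOp_apply, FPF.IsDescent, FPF.conj_apply, Equiv.swap_apply_left,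
    Equiv.swap_apply_right, Equiv.swap_apply_of_ne_of_ne, FPF.conj_braid hij.ne hik.ne hjk.ne,
    FPF.conj_conj, hij.ne, hik.ne, hjk.ne', hik.ne', hi, hj, hk, ne_eq, not_false_eq_true, and_true]
  generalize z.1 i = a at *
  generalize z.1 j = b at *
  generalize z.1 k = c at *
  rcases hab.lt_or_gt with ab | ab <;> rcases hbc.lt_or_gt with bc | bc <;>
    rcases hac.lt_or_gt with ac | ac <;>
    first
    | (exfalso; order)
    | (simp only [ab, bc, ac, not_lt_of_gt, if_true, if_false] <;> ring)

/-- The orbit of `z` under the two conjugations has three elements, and one of the two products of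
two operators vanishes on it. -/
theorem spOp_braid_apply_of_internal (hij : (j : ℕ) = i + 1) (hjk : (k : ℕ) = j + 1) (z : FPF n)
    (hz : z.1 i ∈ ({i, j, k} : Finset (Fin n)) ∨ z.1 j ∈ ({i, j, k} : Finset (Fin n)))
    (f : FPF n → R) :
    spOp β i j (spOp β j k (spOp β i j f)) z = spOp β j k (spOp β i j (spOp β j k f)) z := by
  have orbit : z.1 i = j ∧ z.1 j = i ∧ z.1 k ∉ ({i, j, k} : Finset (Fin n)) ∨
      z.1 i = k ∧ z.1 k = i ∧ z.1 j ∉ ({i, j, k} : Finset (Fin n)) ∨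
      z.1 j = k ∧ z.1 k = j ∧ z.1 i ∉ ({i, j, k} : Finset (Fin n)) := by
    have := z.apply_apply i
    have := z.apply_apply j
    have := z.apply_apply k
    have := z.apply_ne i
    have := z.apply_ne j
    have := z.apply_ne k
    grind
  have outside (p : Fin n) (hp : p ∉ ({i, j, k} : Finset (Fin n))) :
      (p ≠ i ∧ p ≠ j ∧ p ≠ k) ∧ (p < i ∧ p < j ∧ p < k ∨ i < p ∧ j < p ∧ k < p) := by
    grind
  have ij : i < j := by omega
  have jk : j < k := by omega
  have ik : i < k := by omega
  rcases orbit with ⟨h, h', hp⟩ | ⟨h, h', hp⟩ | ⟨h, h', hp⟩ <;>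
    obtain ⟨⟨hi, hj, hk⟩, ⟨gi, -, gk⟩ | ⟨gi, -, gk⟩⟩ := outside _ hp <;>
    simp [spOp_apply, FPF.IsDescent, FPF.conj_apply, Equiv.swap_apply_of_ne_of_ne,
      ij.ne, ik.ne, jk.ne', ik.ne', h, h', hi, hj, hk, gi, gk, gi.not_gt, gk.not_gt, ij, jk]

theorem spOp_braid (hij : (j : ℕ) = i + 1) (hjk : (k : ℕ) = j + 1) :
    spOp β i j * spOp β j k * spOp β i j = spOp β j k * spOp β i j * spOp β j k := by
  refine LinearMap.ext fun f => funext fun z => ?_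
  by_cases hz : z.1 i ∈ ({i, j, k} : Finset (Fin n)) ∨ z.1 j ∈ ({i, j, k} : Finset (Fin n))
  · exact spOp_braid_apply_of_internal β hij hjk z hz f
  · rw [not_or] at hz
    exact spOp_braid_apply_of_free β (by omega) (by omega) z hz.1 hz.2 f

variable (n)

/-- The symplectic Hecke operator of the letter `a`, which is zero when `a` is out of range. -/
def spHecke (a : ℕ) : Module.End R (FPF n → R) :=
  if h : a + 1 < n then spOp β ⟨a, by omega⟩ ⟨a + 1, h⟩ else 0

theorem spHecke_of_lt {a : ℕ} (h : a + 1 < n) :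
    spHecke n β a = spOp β ⟨a, by omega⟩ ⟨a + 1, h⟩ := dif_pos h

theorem spHecke_of_le {a : ℕ} (h : n ≤ a + 1) : spHecke n β a = 0 := dif_neg h.not_gt

theorem isHeckeFamily_spHecke : IsHeckeFamily β (spHecke n β) where
  mul_self a := by
    rcases lt_or_ge (a + 1) n with h | h
    · rw [spHecke_of_lt n β h, spOp_mul_self]
    · rw [spHecke_of_le n β h, mul_zero, smul_zero]
  commute a b hab := by
    rcases lt_or_ge (b + 1) n with h | h
    · rw [spHecke_of_lt n β h, spHecke_of_lt n β (show a + 1 < n by omega)]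
      exact spOp_commute β rfl rfl (Fin.mk_lt_mk.2 (by omega))
    · rw [spHecke_of_le n β h]
      exact Commute.zero_right _
  braid a := by
    rcases lt_or_ge (a + 1 + 1) n with h | h
    · rw [spHecke_of_lt n β h, spHecke_of_lt n β (show a + 1 < n by omega)]
      exact spOp_braid β rfl rfl
    · rw [spHecke_of_le n β h, mul_zero, zero_mul, zero_mul]

end

namespace FPF

theorem isDescent_conj {i j : Fin n} {z : FPF n} (h : z.1 i < z.1 j) (hne : z.1 i ≠ j) :
    (z.conj i j).IsDescent i j := by
  have := z.apply_apply i
  have := z.apply_apply j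
  have := z.apply_ne i
  have := z.apply_ne j
  simp only [IsDescent, conj_apply, Equiv.swap_apply_left, Equiv.swap_apply_right]
  grind

theorem conj_eq_self {i j : Fin n} {z : FPF n} (h : z.1 i = j) : z.conj i j = z := by
  have := z.apply_apply i
  refine ext fun p => ?_
  have := z.apply_apply p
  simp only [conj_apply]; grind

/-- The fixed-point-free involution `Θ`. -/
def theta (hn : n % 2 = 0) : FPF n :=
  ⟨_root_.theta n hn, Equiv.ext (Function.Involutive.toPerm_involutive _), fun p hp => by
    have value : (if (p : ℕ) % 2 = 0 then (p : ℕ) + 1 else p - 1) = p := congrArg Fin.val hp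
    split_ifs at value <;> omega⟩

theorem val_theta_apply (hn : n % 2 = 0) (p : Fin n) :
    ((theta hn).1 p : ℕ) = if (p : ℕ) % 2 = 0 then (p : ℕ) + 1 else p - 1 := rfl

end FPF

section

variable {R : Type*} [CommSemiring R] (β : R) {i j : Fin n}

theorem spOp_single_of_lt {w : FPF n} (h : w.1 i < w.1 j) (hne : w.1 i ≠ j) :
    spOp β i j (Pi.single w 1) = Pi.single (w.conj i j) 1 := by
  ext z
  rw [spOp_apply]
  by_cases hz : z = w.conj i j
  · subst hz
    have conj_ne : w.conj i j ≠ w := fun e => (e ▸ FPF.isDescent_conj h hne).1.not_gt h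
    simp [FPF.isDescent_conj h hne, conj_ne]
  · have conj_ne : z.conj i j ≠ w := fun e => hz (by rw [← e, FPF.conj_conj])
    have ne_of_descent : z.IsDescent i j → z ≠ w := by rintro hd rfl; exact hd.1.not_gt h
    split_ifs with hd
    · simp [hz, conj_ne, ne_of_descent hd]
    · simp [hz]

theorem spOp_single_of_eq {w : FPF n} (h : w.1 i = j) : spOp β i j (Pi.single w 1) = 0 := by
  ext z
  rw [spOp_apply]
  split_ifs with hd
  · have ne : z ≠ w := by rintro rfl; exact hd.2 h
    have conj_ne : z.conj i j ≠ w := fun e => ne (by rw [← FPF.conj_eq_self h, ← e, FPF.conj_conj])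
    simp [ne, conj_ne]
  · rfl

theorem spHecke_single_theta (hn : n % 2 = 0) (j : ℕ) :
    spHecke n β (2 * j) (Pi.single (FPF.theta hn) 1) = 0 := by
  rcases lt_or_ge (2 * j + 1) n with h | h
  · rw [spHecke_of_lt n β h]
    refine spOp_single_of_eq β (Fin.ext ?_)
    rw [FPF.val_theta_apply, if_pos (by simp)]
  · rw [spHecke_of_le n β h, LinearMap.zero_apply]

theorem spOp_spOp_single {w : FPF n} {p₀ p₁ p₂ p₃ : Fin n} (h₀₁ : p₀ < p₁) (h₁₂ : p₁ < p₂)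
    (h₂₃ : p₂ < p₃) (h₀ : w.1 p₀ = p₁) (h₂ : w.1 p₂ = p₃) :
    spOp β p₀ p₁ (spOp β p₁ p₂ (Pi.single w 1)) =
      spOp β p₂ p₃ (spOp β p₁ p₂ (Pi.single w 1)) := by
  have h₁ : w.1 p₁ = p₀ := h₀ ▸ w.apply_apply p₀
  have h₀₂ := h₀₁.trans h₁₂
  have h₀₃ := h₀₂.trans h₂₃
  have h₁₃ := h₁₂.trans h₂₃
  rw [spOp_single_of_lt β (by rwa [h₁, h₂]) (by rw [h₁]; exact h₀₂.ne)]
  set v := w.conj p₁ p₂ with hv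
  have v₀ : v.1 p₀ = p₂ := by
    simp [hv, FPF.conj_apply, Equiv.swap_apply_of_ne_of_ne, h₀₁.ne, h₀₂.ne, h₀]
  have v₁ : v.1 p₁ = p₃ := by
    simp [hv, FPF.conj_apply, Equiv.swap_apply_of_ne_of_ne, h₂, h₁₃.ne', h₂₃.ne']
  have v₂ : v.1 p₂ = p₀ := v₀ ▸ v.apply_apply p₀
  have v₃ : v.1 p₃ = p₁ := v₁ ▸ v.apply_apply p₁
  rw [spOp_single_of_lt β (by rwa [v₀, v₁]) (by rw [v₀]; exact h₁₂.ne'),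
    spOp_single_of_lt β (by rwa [v₂, v₃]) (by rw [v₂]; exact h₀₃.ne),
    ← v.conj_apply_apply p₀ p₁, v₀, v₁]

theorem spHecke_spHecke_single_theta (hn : n % 2 = 0) (j : ℕ) :
    spHecke n β (2 * j) (spHecke n β (2 * j + 1) (Pi.single (FPF.theta hn) 1)) =
      spHecke n β (2 * j + 2) (spHecke n β (2 * j + 1) (Pi.single (FPF.theta hn) 1)) := by
  rcases lt_or_ge (2 * j + 2) n with h | h
  · have h' : 2 * j + 2 + 1 < n := by omega
    rw [spHecke_of_lt n β (show 2 * j + 1 < n by omega), spHecke_of_lt n β h,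
      spHecke_of_lt n β h']
    refine spOp_spOp_single β ?_ ?_ ?_ (Fin.ext ?_) (Fin.ext ?_)
    · exact Fin.mk_lt_mk.2 (by omega)
    · exact Fin.mk_lt_mk.2 (by omega)
    · exact Fin.mk_lt_mk.2 (by omega)
    · rw [FPF.val_theta_apply, if_pos (by simp)]
    · rw [FPF.val_theta_apply, if_pos (show (2 * j + 2) % 2 = 0 by omega)]
  · rw [spHecke_of_le n β h, LinearMap.zero_apply, map_zero, map_zero]

theorem isSymplecticVacuum_single_theta {R : Type*} [CommRing R] (β : R) (hn : n % 2 = 0) :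
    IsSymplecticVacuum (spHecke n β) (Pi.single (FPF.theta hn) 1) where
  annihilate := spHecke_single_theta β hn
  exchange := spHecke_spHecke_single_theta β hn

end

section

variable {R S : Type*} [CommSemiring R] [CommSemiring S]

/-- The coefficients on the fixed-point-free involutions of the product of the columns applied to
`Θ`. In the variables of a polynomial ring these are the symplectic Grothendieck polynomials. The
entries `x k` with `n ≤ k` are irrelevant. -/
def spGroth (hn : n % 2 = 0) (β : R) (x : ℕ → R) : FPF n → R :=
  columnProd (spHecke n β) β x n 0 n (Pi.single (FPF.theta hn) 1)

theorem map_heckeExp_spHecke (φ : R →+* S) (β : R) (a : ℕ) (t : R) (f : FPF n → R) :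
    φ ∘ heckeExp (spHecke n β a) t f = heckeExp (spHecke n (φ β) a) (φ t) (φ ∘ f) := by
  ext z
  simp only [heckeExp, spHecke]
  split_ifs
  · simp [spOp_apply, apply_ite φ]
  · simp

theorem map_column_spHecke (φ : R →+* S) (β s : R) (y : ℕ → R) (r m : ℕ) (f : FPF n → R) :
    φ ∘ column (spHecke n β) β s y r m f =
      column (spHecke n (φ β)) (φ β) (φ s) (φ ∘ y) r m (φ ∘ f) := by
  induction m with
  | zero => rfl
  | succ m ih =>
    simp only [column, Module.End.mul_apply, map_heckeExp_spHecke, ih, fglAdd, map_add, map_mul,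
      Function.comp_apply]

theorem map_columnProd_spHecke (φ : R →+* S) (β : R) (x : ℕ → R) (j d : ℕ) (f : FPF n → R) :
    φ ∘ columnProd (spHecke n β) β x n j d f =
      columnProd (spHecke n (φ β)) (φ β) (φ ∘ x) n j d (φ ∘ f) := by
  induction d generalizing j with
  | zero => rfl
  | succ d ih =>
    simp only [columnProd, Module.End.mul_apply, map_column_spHecke, ih]
    rfl

theorem map_spGroth (hn : n % 2 = 0) (φ : R →+* S) (β : R) (x : ℕ → R) :
    φ ∘ spGroth hn β x = spGroth hn (φ β) (φ ∘ x) := by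
  rw [spGroth, map_columnProd_spHecke, spGroth]
  congr 1
  ext z
  simp [Pi.single_apply, apply_ite φ]

end

section

variable {R : Type*} [CommRing R] (hn : n % 2 = 0) (β : R) (x : ℕ → R)

theorem sub_mul_spGroth_conj {i : ℕ} (hi : i + 1 < n) {z : FPF n}
    (hz : z.IsDescent ⟨i, by omega⟩ ⟨i + 1, hi⟩) :
    (x i - x (i + 1)) * spGroth hn β x (z.conj ⟨i, by omega⟩ ⟨i + 1, hi⟩) =
      (1 + β * x (i + 1)) * spGroth hn β x z -
        (1 + β * x i) * spGroth hn β (x ∘ Equiv.swap i (i + 1)) z := by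
  have symm : heckeExp (spOp β ⟨i, by omega⟩ ⟨i + 1, hi⟩) (x (i + 1)) (spGroth hn β x) =
      heckeExp (spOp β ⟨i, by omega⟩ ⟨i + 1, hi⟩) (x i)
        (spGroth hn β (x ∘ Equiv.swap i (i + 1))) := by
    rw [← spHecke_of_lt n β hi]
    exact (isSymplecticVacuum_single_theta β hn).heckeExp_columnProd_swap
      (isHeckeFamily_spHecke n β) (fun a => spHecke_of_le n β) x i.zero_le hi (by omega)
  have at_z := congrFun symm z
  have at_conj := congrFun symm (z.conj ⟨i, by omega⟩ ⟨i + 1, hi⟩)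
  simp only [heckeExp, LinearMap.add_apply, Module.End.one_apply, LinearMap.smul_apply,
    Pi.add_apply, Pi.smul_apply, smul_eq_mul, spOp_apply, hz, FPF.not_isDescent_conj hz, if_true,
    if_false, mul_zero, add_zero] at at_z at_conj
  linear_combination x i * at_conj - at_z

end

section

/-- The indeterminates `x₀, …, x_{n-1}`, continued by zero. -/
def varSeq (R : Type*) [CommSemiring R] (n : ℕ) : ℕ → MvPolynomial (Fin n) R :=
  Function.extend Fin.val X fun _ => 0

variable {R S : Type*} [CommSemiring R] [CommSemiring S]

theorem varSeq_val (i : Fin n) : varSeq R n i = X i :=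
  Fin.val_injective.extend_apply X _ i

theorem varSeq_of_le {k : ℕ} (h : n ≤ k) : varSeq R n k = 0 :=
  Function.extend_apply' X _ k fun ⟨i, hi⟩ => (hi ▸ i.isLt).not_ge h

theorem map_comp_varSeq (φ : R →+* S) : MvPolynomial.map φ ∘ varSeq R n = varSeq S n := by
  ext1 k
  rcases lt_or_ge k n with h | h
  · lift k to Fin n using h
    rw [Function.comp_apply, varSeq_val, varSeq_val, map_X]
  · rw [Function.comp_apply, varSeq_of_le h, varSeq_of_le h, map_zero]

theorem rename_comp_varSeq {i j : Fin n} :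
    rename (Equiv.swap i j) ∘ varSeq R n = varSeq R n ∘ Equiv.swap (i : ℕ) j := by
  ext1 k
  rcases lt_or_ge k n with h | h
  · lift k to Fin n using h
    rw [Function.comp_apply, Function.comp_apply, varSeq_val, rename_X,
      ← Fin.val_injective.map_swap, varSeq_val]
  · rw [Function.comp_apply, comp_swap_apply_of_ne _ (by omega) (by omega), varSeq_of_le h,
      map_zero]

theorem rename_swap_spGroth (hn : n % 2 = 0) (β : R) (i j : Fin n) (z : FPF n) :
    rename (Equiv.swap i j) (spGroth hn (C β) (varSeq R n) z) =
      spGroth hn (C β) (varSeq R n ∘ Equiv.swap (i : ℕ) j) z := by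
  have h := congrFun (map_spGroth hn (rename (R := R) (Equiv.swap i j)).toRingHom (C β)
    (varSeq R n)) z
  rw [← rename_comp_varSeq]
  simpa only [Function.comp_apply, AlgHom.toRingHom_eq_coe, RingHom.coe_coe, rename_C] using h

theorem isDivDiffB_spGroth (hn : n % 2 = 0) {i j : Fin n} (hij : (j : ℕ) = i + 1) {z : FPF n}
    (hz : z.IsDescent i j) :
    IsDivDiffB i j (spGroth hn (C bb) (varSeq Rb n) z)
      (spGroth hn (C bb) (varSeq Rb n) (z.conj i j)) := by
  obtain ⟨j, hj⟩ := j
  obtain rfl : j = i + 1 := hij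
  rw [IsDivDiffB, map_mul, rename_swap_spGroth]
  have h := sub_mul_spGroth_conj hn (C bb) (varSeq Rb n) hj hz
  rw [varSeq_val i, show varSeq Rb n (i + 1) = _ from varSeq_val ⟨i + 1, hj⟩] at h
  have factor : rename (Equiv.swap i ⟨i + 1, hj⟩) (1 + C bb * X ⟨i + 1, hj⟩) =
      1 + C bb * X i := by
    rw [map_add, map_mul, map_one, rename_C, rename_X, Equiv.swap_apply_right]
  rw [factor]
  exact h

theorem coeff_spGroth_nonneg (hn : n % 2 = 0) (z : FPF n) (m : Fin n →₀ ℕ) (k : ℕ) :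
    0 ≤ (coeff m (spGroth hn (C bb) (varSeq Rb n) z)).coeff k := by
  have lift := map_spGroth hn (MvPolynomial.map (σ := Fin n)
    (Polynomial.mapRingHom (Nat.castRingHom ℤ))) (C Polynomial.X) (varSeq _ n)
  rw [map_comp_varSeq, map_C, Polynomial.coe_mapRingHom, Polynomial.map_X] at lift
  rw [bb, ← lift, Function.comp_apply, coeff_map, Polynomial.coe_mapRingHom, Polynomial.coeff_map]
  exact Int.natCast_nonneg _

end

namespace FPF

variable {hn : n % 2 = 0} {j : ℕ} {z : FPF n}

/-- `z` agrees with `Θ` on the first `2 * j` points. -/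
def EqThetaBelow (hn : n % 2 = 0) (j : ℕ) (z : FPF n) : Prop :=
  ∀ p : Fin n, (p : ℕ) < 2 * j → z.1 p = (theta hn).1 p

theorem EqThetaBelow.le_apply (hz : EqThetaBelow hn j z) {p : Fin n} (hp : 2 * j ≤ p) :
    2 * j ≤ (z.1 p : ℕ) := by
  by_contra! h
  have value := congrArg Fin.val (hz _ h)
  rw [z.apply_apply, val_theta_apply] at value
  split_ifs at value <;> omega

theorem EqThetaBelow.conj (hz : EqThetaBelow hn j z) {a b : Fin n} (ha : 2 * j ≤ a)
    (hb : 2 * j ≤ b) : EqThetaBelow hn j (z.conj a b) := by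
  intro p hp
  have value := val_theta_apply hn p
  rw [conj_apply, Equiv.swap_apply_of_ne_of_ne (x := p) (by omega) (by omega), hz p hp,
    Equiv.swap_apply_of_ne_of_ne] <;> split_ifs at value <;> omega

/-- `z` is `Θ` on the first `2 * j` points and the order-reversing permutation of the others. -/
structure IsColumnTop (hn : n % 2 = 0) (j : ℕ) (z : FPF n) : Prop where
  eqThetaBelow : EqThetaBelow hn j z
  strictAntiOn : StrictAntiOn z.1 {p | 2 * j ≤ (p : ℕ)}

/-- The involutions met when the column `j` is applied: `z` is `Θ` on the points before `q = 2 * j`,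
exchanges `q` and `a`, and reverses the order of the other points. -/
structure IsColumnStage (hn : n % 2 = 0) (j : ℕ) (q a : Fin n) (z : FPF n) : Prop where
  eqThetaBelow : EqThetaBelow hn j z
  apply_eq : z.1 q = a
  strictAntiOn : StrictAntiOn z.1 {p | q < p ∧ p ≠ a}

theorem IsColumnTop.isColumnStage (hz : IsColumnTop hn j z) {q a : Fin n} (hq : (q : ℕ) = 2 * j)
    (ha : (a : ℕ) + 1 = n) : IsColumnStage hn j q a z := by
  refine ⟨hz.eqThetaBelow, ?_, hz.strictAntiOn.mono fun p hp => ?_⟩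
  · have hle := hz.eqThetaBelow.le_apply (p := a) (by omega)
    rcases (show q ≤ z.1 a by omega).eq_or_lt with h | h
    · rw [h, z.apply_apply]
    · have := hz.strictAntiOn hq.ge hle h
      rw [z.apply_apply] at this
      omega
  · have := hp.1
    rw [Set.mem_ofPred_eq]; omega

theorem IsColumnStage.isColumnTop {q a : Fin n} (hz : IsColumnStage hn j q a z)
    (hq : (q : ℕ) = 2 * j) (ha : (a : ℕ) = q + 1) : IsColumnTop hn (j + 1) z := by
  refine ⟨fun p hp => ?_, hz.strictAntiOn.mono fun p hp => ?_⟩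
  · rcases lt_or_ge (p : ℕ) (2 * j) with h | h
    · exact hz.eqThetaBelow p h
    have value := val_theta_apply hn p
    have hqa := hz.apply_eq
    have haq : z.1 a = q := hqa ▸ z.apply_apply q
    rcases (show p = q ∨ p = a by omega) with rfl | rfl
    · rw [if_pos (by omega)] at value
      omega
    · rw [if_neg (by omega)] at value
      omega
  · rw [Set.mem_ofPred_eq] at hp ⊢
    omega

theorem IsColumnStage.conj {q a b : Fin n} (hz : IsColumnStage hn j q a z)
    (hq : (q : ℕ) = 2 * j) (hqb : q < b) (hab : (a : ℕ) = b + 1) :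
    IsColumnStage hn j q b (z.conj b a) := by
  have apply_ne (p : Fin n) (hp : p ≠ q) : z.1 p ≠ a := fun h =>
    hp (z.1.injective (h.trans hz.apply_eq.symm))
  refine ⟨hz.eqThetaBelow.conj (by omega) (by omega), ?_, ?_⟩
  · rw [conj_apply, Equiv.swap_apply_of_ne_of_ne (x := q) (by omega) (by omega), hz.apply_eq,
      Equiv.swap_apply_right]
  · have swap_lt {s t : Fin n} (hst : s < t) (h : t ≠ a ∨ s ≠ b) :
        Equiv.swap b a s < Equiv.swap b a t := by grind
    have mem {p : Fin n} (hp : q < p ∧ p ≠ b) :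
        q < Equiv.swap b a p ∧ Equiv.swap b a p ≠ a := by grind
    intro s hs t ht hst
    exact swap_lt (hz.strictAntiOn (mem hs) (mem ht) (swap_lt hst (.inr hs.2)))
      (.inl (apply_ne _ (mem hs).1.ne'))

theorem IsColumnStage.isDescent {q a b : Fin n} (hz : IsColumnStage hn j q a z)
    (hq : (q : ℕ) = 2 * j) (hqb : q < b) (hba : b < a) : z.IsDescent b a := by
  have haq : z.1 a = q := hz.apply_eq ▸ z.apply_apply q
  have hle := hz.eqThetaBelow.le_apply (p := b) (by omega)
  have hne : z.1 b ≠ q := fun h => hba.ne (z.1.injective (h.trans haq.symm))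
  exact ⟨by omega, fun h => hqb.ne' (z.1.injective (h.trans hz.apply_eq.symm))⟩

end FPF

section

variable {R : Type*} [CommSemiring R] {β s : R} {y : ℕ → R} {j m : ℕ} {f : FPF n → R} {z : FPF n}

theorem ne_zero_of_heckeExp_spHecke_apply_ne_zero {a : ℕ} {t : R}
    (h : heckeExp (spHecke n β a) t f z ≠ 0) :
    f z ≠ 0 ∨ ∃ ha : a + 1 < n, f (z.conj ⟨a, by omega⟩ ⟨a + 1, ha⟩) ≠ 0 := by
  contrapose! h
  simp only [heckeExp, spHecke]
  split_ifs with ha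
  · simp [spOp_apply, h.1, h.2 ha]
  · simp [h.1]

variable {hn : n % 2 = 0}

theorem column_spHecke_support (hf : ∀ w, f w ≠ 0 → w.EqThetaBelow hn (j + 1))
    (hz : column (spHecke n β) β s y (2 * j + 1) m f z ≠ 0) :
    z.EqThetaBelow hn j ∧ ∀ q : Fin n, (q : ℕ) = 2 * j → (z.1 q : ℕ) ≤ 2 * j + 1 + m := by
  induction m generalizing z with
  | zero =>
    refine ⟨fun p hp => hf z hz p (by omega), fun q hq => ?_⟩
    rw [hf z hz q (by omega), FPF.val_theta_apply, if_pos (by omega)]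
    omega
  | succ m ih =>
    rcases ne_zero_of_heckeExp_spHecke_apply_ne_zero hz with h | ⟨ha, h⟩
    · obtain ⟨eq_theta, le⟩ := ih h
      exact ⟨eq_theta, fun q hq => (le q hq).trans (by omega)⟩
    · obtain ⟨eq_theta, le⟩ := ih h
      set a : Fin n := ⟨2 * j + 1 + m, by omega⟩
      set b : Fin n := ⟨2 * j + 1 + m + 1, ha⟩
      have hja : 2 * j + 1 ≤ a := Nat.le_add_right _ _
      have hjb : 2 * j + 1 ≤ b := Nat.le_add_right _ (m + 1)
      refine ⟨?_, fun q hq => ?_⟩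
      · simpa only [FPF.conj_conj] using
          eq_theta.conj (show 2 * j ≤ (a : ℕ) by omega) (show 2 * j ≤ (b : ℕ) by omega)
      have := le q hq
      rw [FPF.conj_apply, Equiv.swap_apply_of_ne_of_ne (x := q) (by omega) (by omega)] at this
      grind

theorem columnProd_spHecke_support {x : ℕ → R} {d : ℕ}
    (hz : columnProd (spHecke n β) β x n j d (Pi.single (FPF.theta hn) 1) z ≠ 0) :
    z.EqThetaBelow hn j := by
  induction d generalizing j z with
  | zero =>
    obtain rfl : z = FPF.theta hn := by
      by_contra h
      exact hz (Pi.single_eq_of_ne h 1)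
    exact fun _ _ => rfl
  | succ d ih => exact (column_spHecke_support (fun w hw => ih hw) hz).1

theorem column_spHecke_apply_of_isColumnStage {c : R}
    (hf : ∀ w, f w ≠ 0 → w.EqThetaBelow hn (j + 1))
    (hc : ∀ w, w.IsColumnTop hn (j + 1) → f w = c) {q a : Fin n} (hq : (q : ℕ) = 2 * j)
    (ha : (a : ℕ) = 2 * j + 1 + m) (hz : z.IsColumnStage hn j q a) :
    column (spHecke n β) β s y (2 * j + 1) m f z =
      (∏ k ∈ Finset.range m, fglAdd β s (y k)) * c := by
  induction m generalizing a z with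
  | zero => simpa [column] using hc z (hz.isColumnTop hq (by omega))
  | succ m ih =>
    obtain ⟨a, hlt⟩ := a
    obtain rfl : a = 2 * j + 1 + m + 1 := ha
    set b : Fin n := ⟨2 * j + 1 + m, by omega⟩
    have hqb : q < b := Fin.lt_def.2 (show (q : ℕ) < 2 * j + 1 + m by omega)
    have vanish : column (spHecke n β) β s y (2 * j + 1) m f z = 0 := by
      by_contra h
      have := (column_spHecke_support hf h).2 q hq
      rw [hz.apply_eq] at this
      exact Nat.not_succ_le_self _ this
    have ih := ih (a := b) rfl (hz.conj hq hqb rfl)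
    have descent := hz.isDescent hq hqb (Fin.lt_def.2 (Nat.lt_succ_self _))
    rw [Finset.prod_range_succ, column, Module.End.mul_apply, spHecke_of_lt n β hlt]
    simp only [heckeExp, LinearMap.add_apply, Module.End.one_apply, LinearMap.smul_apply,
      Pi.add_apply, Pi.smul_apply, smul_eq_mul, spOp_apply]
    rw [if_pos descent, vanish, ih]
    ring

theorem columnProd_spHecke_apply_of_isColumnTop {x : ℕ → R} {d : ℕ} (hd : n ≤ 2 * (j + d))
    (hz : z.IsColumnTop hn j) :
    columnProd (spHecke n β) β x n j d (Pi.single (FPF.theta hn) 1) z =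
      ∏ k ∈ Finset.Ico j (j + d), ∏ i ∈ Finset.Ico (k + 1) (n - 1 - k), fglAdd β (x k) (x i) := by
  induction d generalizing j z with
  | zero =>
    obtain rfl : z = FPF.theta hn := FPF.ext fun p => hz.eqThetaBelow p (by omega)
    simp [columnProd]
  | succ d ih =>
    have hd : n ≤ 2 * (j + 1 + d) := by omega
    rw [Finset.prod_eq_prod_Ico_succ_bot (by omega), columnProd, Module.End.mul_apply,
      ← add_assoc, add_right_comm j d 1]
    rcases lt_or_ge (2 * j) n with h | h
    · obtain ⟨m, hm⟩ : ∃ m, n - 1 - j = m + (j + 1) := ⟨n - 1 - j - (j + 1), by omega⟩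
      rw [Finset.prod_Ico_eq_prod_range _ (j + 1) (n - 1 - j), hm, add_tsub_cancel_right,
        column_add, column_eq_one fun a ha => spHecke_of_le n β (by omega), one_mul]
      have ha : n - 1 = 2 * j + 1 + m := by omega
      exact column_spHecke_apply_of_isColumnStage (q := ⟨2 * j, h⟩) (a := ⟨n - 1, by omega⟩)
        (fun w => columnProd_spHecke_support) (fun w => ih hd) rfl ha
        (hz.isColumnStage rfl (Nat.sub_add_cancel (by omega)))
    · rw [column_eq_one fun a ha => spHecke_of_le n β (by omega), Module.End.one_apply,
        Finset.Ico_eq_empty (by omega), Finset.prod_empty, one_mul]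
      exact ih hd ⟨fun p _ => hz.eqThetaBelow p (by omega),
        hz.strictAntiOn.mono fun p hp => by rw [Set.mem_ofPred_eq] at hp ⊢; omega⟩

theorem spGroth_apply_of_isColumnTop {x : ℕ → R} (hz : z.IsColumnTop hn 0) :
    spGroth hn β x z =
      ∏ k ∈ Finset.range n, ∏ i ∈ Finset.Ico (k + 1) (n - 1 - k), fglAdd β (x k) (x i) := by
  rw [spGroth, columnProd_spHecke_apply_of_isColumnTop (by omega) hz, zero_add,
    Nat.Ico_zero_eq_range]

end

theorem exists_apply_lt_apply_of_ne_revPerm {z : Equiv.Perm (Fin n)} (hz : z ≠ revPerm n) :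
    ∃ i j : Fin n, (j : ℕ) = i + 1 ∧ z i < z j := by
  contrapose! hz
  have anti : StrictAnti z := strictAnti_of_succ_lt fun i hi => by
    have val_succ : (Order.succ i).val = i + 1 :=
      (Nat.covBy_iff_add_one_eq.1 (Fin.covBy_iff.1 (Order.covBy_succ_of_not_isMax hi))).symm
    exact (hz i _ val_succ).lt_of_ne (z.injective.ne (Fin.ne_of_val_ne (by omega)))
  have rev_comp : Fin.rev ∘ z = id := (Fin.rev_strictAnti.comp anti).eq_id
  exact Equiv.ext fun i => Fin.rev_eq_iff.1 (congrFun rev_comp i)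

theorem FPF.toLex_lt_toLex_conj {i j : Fin n} {z : FPF n} (hij : i < j) (h : z.1 i < z.1 j)
    (hne : z.1 i ≠ j) : toLex ⇑z.1 < toLex ⇑(z.conj i j).1 := by
  have := z.apply_apply i
  have := z.apply_apply j
  have := z.apply_ne i
  have := z.apply_ne j
  refine ⟨min i (z.1 i), fun p hp => ?_, ?_⟩
  · have := z.apply_apply p
    simp only [Pi.toLex_apply, conj_apply]
    grind
  · simp only [Pi.toLex_apply, conj_apply]
    grind

theorem isFPF_revPerm (hn : n % 2 = 0) : IsFPF (revPerm n) :=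
  ⟨Equiv.ext Fin.rev_rev, fun i h => by
    have := congrArg Fin.val h
    simp only [revPerm, Equiv.coe_fn_mk, Fin.val_rev] at this
    omega⟩

theorem spGroth_revPerm (hn : n % 2 = 0) :
    spGroth hn (C bb) (varSeq Rb n) ⟨revPerm n, isFPF_revPerm hn⟩ = spTop n := by
  have top : FPF.IsColumnTop hn 0 ⟨revPerm n, isFPF_revPerm hn⟩ :=
    ⟨fun p hp => absurd hp (by omega), Fin.rev_strictAnti.strictAntiOn _⟩
  rw [spGroth_apply_of_isColumnTop top, spTop, Finset.prod_filter, Fintype.prod_prod_type,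
    ← Fin.prod_univ_eq_prod_range (fun k => ∏ i ∈ Finset.Ico (k + 1) (n - 1 - k), _)]
  refine Finset.prod_congr rfl fun k _ => ?_
  have Ico_eq : Finset.Ico ((k : ℕ) + 1) (n - 1 - k) =
      (Finset.range n).filter fun i => (k : ℕ) < i ∧ (k : ℕ) + i + 2 ≤ n := by
    ext i
    simp only [Finset.mem_Ico, Finset.mem_filter, Finset.mem_range]
    omega
  rw [Ico_eq, Finset.prod_filter, ← Fin.prod_univ_eq_prod_range]
  simp only [varSeq_val, Fin.lt_def, fglAdd, oplus]

theorem IsSpFam.eq_spGroth {G : Equiv.Perm (Fin n) → MvPolynomial (Fin n) Rb}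
    (hG : IsSpFam n G) (hn : n % 2 = 0) (z : FPF n) :
    G z.1 = spGroth hn (C bb) (varSeq Rb n) z := by
  induction z using (InvImage.wf (fun z : FPF n => toLex ⇑z.1) wellFounded_gt).induction with
  | _ z ih
  rcases eq_or_ne z.1 (revPerm n) with h | h
  · obtain rfl : z = ⟨revPerm n, isFPF_revPerm hn⟩ := Subtype.ext h
    rw [spGroth_revPerm hn]
    exact hG.1
  obtain ⟨i, j, hij, hlt⟩ := exists_apply_lt_apply_of_ne_revPerm h
  have hi : i < j := by omega
  have hne : z.1 i ≠ j := by
    rintro rfl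
    exact hlt.not_gt (by rwa [z.apply_apply])
  set w := z.conj i j
  have hw : w.IsDescent i j := FPF.isDescent_conj hlt hne
  have hwj : w.1 j ≠ i := fun h => hw.2 (h ▸ w.apply_apply j)
  have recursion := hG.2 w.1 w.2 i j hij hw.2 hwj hw.1
  have recursion' := isDivDiffB_spGroth hn hij hw
  rw [ih w (FPF.toLex_lt_toLex_conj hi hlt hne)] at recursion
  have conj_w : w.conj i j = z := FPF.conj_conj i j z
  rw [conj_w] at recursion'
  change IsDivDiffB i j _ (G (w.conj i j).1) at recursion
  rw [conj_w] at recursion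
  exact mul_left_cancel₀ (sub_ne_zero.2 (X_injective.ne hi.ne))
    (recursion.trans recursion'.symm)

end SymplecticHecke

theorem statement4 (n : ℕ) (hpos : 0 < n) (hev : n % 2 = 0)
    (G : Equiv.Perm (Fin n) → MvPolynomial (Fin n) Rb) (hG : IsSpFam n G)
    (z : Equiv.Perm (Fin n)) (hz : IsFPF z) :
    ∀ (m : Fin n →₀ ℕ) (k : ℕ), 0 ≤ (MvPolynomial.coeff m (G z)).coeff k := by
  intro m k
  rw [hG.eq_spGroth hev ⟨z, hz⟩]
  exact coeff_spGroth_nonneg hev ⟨z, hz⟩ m k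

end
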